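/- (Bézout in the plane) Two plane projective curves in P²(ℂ) of degrees 2 and 3 with no common irreducible component intersect in at most 6 points; if they intersect transversally, they intersect in exactly 6 points. -/

import Mathlib

open MvPolynomial

/-- The zero locus in `P²(ℂ)` of a polynomial. -/
def projZeroLocus (h : MvPolynomial (Fin 3) ℂ) :
    Set (Projectivization ℂ (Fin 3 → ℂ)) :=
  {p | eval p.rep h = 0}

lemma hom_eval_smul {n : ℕ} {g : MvPolynomial (Fin 3) ℂ} (hg : g.IsHomogeneous n) (a : ℂ)
    (v : Fin 3 → ℂ) : eval (a • v) g = a ^ n * eval v g := by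
  rw [eval_eq, eval_eq, Finset.mul_sum]
  refine Finset.sum_congr rfl fun m hm => ?_
  have := hg.degree_eq_sum_deg_support hm
  simp only [Pi.smul_apply, smul_eq_mul, mul_pow, Finset.prod_mul_distrib, Finset.prod_pow_eq_pow_sum]
  rw [← this]
  ring

lemma mk_mem_locus {n : ℕ} {g : MvPolynomial (Fin 3) ℂ} (hg : g.IsHomogeneous n)
    (v : Fin 3 → ℂ) (hv : v ≠ 0) :
    Projectivization.mk ℂ v hv ∈ projZeroLocus g ↔ eval v g = 0 := by
  obtain ⟨a, ha⟩ := Projectivization.exists_smul_eq_mk_rep ℂ v hv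
  have h : eval (Projectivization.mk ℂ v hv).rep g = (a : ℂ) ^ n * eval v g := by
    rw [← ha, ← hom_eval_smul hg]; rfl
  simp [projZeroLocus, h]

lemma aeval_degree {n k : ℕ} {g : MvPolynomial (Fin 3) ℂ} (hg : g.IsHomogeneous n)
    (P : Fin 3 → Polynomial ℂ) (hP : ∀ i, (P i).natDegree ≤ k) :
    (aeval P g).natDegree ≤ n * k ∧
    (aeval P g).coeff (n * k) = eval (fun i => (P i).coeff k) g := by
  have key : ∀ m ∈ g.support, (∏ i, P i ^ m i).natDegree ≤ n * k ∧
      (∏ i, P i ^ m i).coeff (n * k) = ∏ i, (P i).coeff k ^ m i := by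
    intro m hm
    have h1 : n = m 0 + m 1 + m 2 := by
      have h2 : m.degree = n := by
        have := hg (mem_support_iff.mp hm)
        rwa [Finsupp.degree_eq_weight_one]
      rw [← h2, Finsupp.degree_eq_sum, Fin.sum_univ_three]
    have d : ∀ i, (P i ^ m i).natDegree ≤ m i * k :=
      fun i => Polynomial.natDegree_pow_le_of_le _ (hP i)
    have cc : ∀ i, (P i ^ m i).coeff (m i * k) = (P i).coeff k ^ m i :=
      fun i => Polynomial.coeff_pow_of_natDegree_le (hP i)
    have d01 : (P 0 ^ m 0 * P 1 ^ m 1).natDegree ≤ m 0 * k + m 1 * k :=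
      Polynomial.natDegree_mul_le_of_le (d 0) (d 1)
    have e : n * k = m 0 * k + m 1 * k + m 2 * k := by rw [h1]; ring
    rw [Fin.prod_univ_three, Fin.prod_univ_three, e]
    refine ⟨Polynomial.natDegree_mul_le_of_le d01 (d 2), ?_⟩
    rw [Polynomial.coeff_mul_add_eq_of_natDegree_le d01 (d 2),
      Polynomial.coeff_mul_add_eq_of_natDegree_le (d 0) (d 1), cc, cc, cc]
  have hs : aeval P g = ∑ m ∈ g.support, Polynomial.C (coeff m g) * ∏ i, P i ^ m i := by
    rw [aeval_def, eval₂_eq']; rfl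
  constructor
  · rw [hs]
    refine Polynomial.natDegree_sum_le_of_forall_le _ _ fun m hm => ?_
    exact (Polynomial.natDegree_C_mul_le _ _).trans (key m hm).1
  · rw [hs, Polynomial.finsetSum_coeff, eval_eq']
    refine Finset.sum_congr rfl fun m hm => ?_
    rw [Polynomial.coeff_C_mul, (key m hm).2]

lemma eval_aeval (P : Fin 3 → Polynomial ℂ) (g : MvPolynomial (Fin 3) ℂ) (s : ℂ) :
    (aeval P g).eval s = eval (fun i => (P i).eval s) g := by
  induction g using MvPolynomial.induction_on with
  | C a => simp [Polynomial.algebraMap_eq]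
  | add p q hp hq => simp [hp, hq]
  | mul_X p i hp => simp [hp]

lemma derivative_aeval (P : Fin 3 → Polynomial ℂ) (g : MvPolynomial (Fin 3) ℂ) :
    Polynomial.derivative (aeval P g) =
      ∑ i, aeval P (pderiv i g) * Polynomial.derivative (P i) := by
  induction g using MvPolynomial.induction_on with
  | C a => simp [Polynomial.algebraMap_eq]
  | add p q hp hq => simp [hp, hq, add_mul, Finset.sum_add_distrib]
  | mul_X p i hp =>
    have h1 : ∀ j, aeval P (pderiv j (p * X i)) * Polynomial.derivative (P j) =
        aeval P (pderiv j p) * Polynomial.derivative (P j) * P i +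
        (if j = i then aeval P p * Polynomial.derivative (P j) else 0) := by
      intro j
      rw [pderiv_mul, map_add, map_mul, map_mul, aeval_X]
      split_ifs with h
      · subst h; rw [pderiv_X_self, map_one]; ring
      · rw [pderiv_X_of_ne (Ne.symm h), map_zero]; ring
    rw [Finset.sum_congr rfl fun j _ => h1 j, Finset.sum_add_distrib, ← Finset.sum_mul, ← hp,
      Finset.sum_ite_eq' Finset.univ i, map_mul, aeval_X, Polynomial.derivative_mul]
    simp

lemma two_perp {g h u v : Fin 3 → ℂ} (gu : g ⬝ᵥ u = 0) (gv : g ⬝ᵥ v = 0)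
    (hu : h ⬝ᵥ u = 0) (hv : h ⬝ᵥ v = 0) (hgh : LinearIndependent ℂ ![g, h])
    (huv : LinearIndependent ℂ ![u, v]) : False := by
  rw [← crossProduct_ne_zero_iff_linearIndependent] at hgh huv
  have h1 : crossProduct (crossProduct u v) g = 0 := by
    rw [cross_cross_eq_smul_sub_smul, dotProduct_comm u, dotProduct_comm v, gu, gv]; simp
  have h2 : crossProduct (crossProduct u v) h = 0 := by
    rw [cross_cross_eq_smul_sub_smul, dotProduct_comm u, dotProduct_comm v, hu, hv]; simp
  have h3 : ∀ w, crossProduct (crossProduct u v) w = 0 → ∃ a : ℂ, w = a • crossProduct u v := by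
    intro w hw
    have := crossProduct_ne_zero_iff_linearIndependent.not.mp (not_not.mpr hw)
    rw [LinearIndependent.pair_iff' huv] at this
    push Not at this
    obtain ⟨a, ha⟩ := this
    exact ⟨a, ha.symm⟩
  obtain ⟨a, ha⟩ := h3 g h1
  obtain ⟨b, hb⟩ := h3 h h2
  apply hgh
  rw [ha, hb]; simp

lemma curve_count {n k : ℕ} {q c g : MvPolynomial (Fin 3) ℂ}
    (hq : q.IsHomogeneous 2) (hc : c.IsHomogeneous 3) (hg : g.IsHomogeneous n)
    (hgq : ∀ v, eval v g = 0 → eval v q = 0)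
    (P : Fin 3 → Polynomial ℂ) (hP : ∀ i, (P i).natDegree ≤ k)
    (hA : eval (fun i => (P i).coeff k) c ≠ 0)
    (hgP : ∀ s, eval (fun i => (P i).eval s) g = 0)
    (hind : ∀ s, LinearIndependent ℂ
      ![fun i => (P i).eval s, fun i => (Polynomial.derivative (P i)).eval s])
    (hinj : ∀ s t a : ℂ, (fun i => (P i).eval s) = a • (fun i => (P i).eval t) → s = t)
    (hcov : ∀ v, eval v g = 0 → ∃ a : ℂ, v = a • (fun i => (P i).coeff k) ∨
      ∃ s, v = a • (fun i => (P i).eval s)) :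
    (projZeroLocus g ∩ projZeroLocus c).Finite ∧
    (projZeroLocus g ∩ projZeroLocus c).ncard ≤ 3 * k ∧
    ((∀ v : Fin 3 → ℂ, v ≠ 0 → eval v q = 0 → eval v c = 0 →
        LinearIndependent ℂ
          ![fun i => eval v (pderiv i q), fun i => eval v (pderiv i c)]) →
      (projZeroLocus g ∩ projZeroLocus c).ncard = 3 * k) := by
  classical
  set f := aeval P c with hf
  obtain ⟨hdeg, hco⟩ := aeval_degree hc P hP
  rw [← hf] at hdeg hco
  have hco' : f.coeff (3 * k) ≠ 0 := by rw [hco]; exact hA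
  have hf0 : f ≠ 0 := by rintro h; simp [h] at hco'
  have hdeg' : f.natDegree = 3 * k := le_antisymm hdeg (Polynomial.le_natDegree_of_ne_zero hco')
  have hP0 : ∀ s, (fun i => (P i).eval s) ≠ 0 := fun s => (hind s).ne_zero 0
  set φ : ℂ → Projectivization ℂ (Fin 3 → ℂ) := fun s => Projectivization.mk ℂ _ (hP0 s) with hφ
  have hφi : Function.Injective φ := by
    intro s t hst
    obtain ⟨a, ha⟩ := (Projectivization.mk_eq_mk_iff' ℂ _ _ _ _).mp hst
    exact hinj s t a ha.symm
  have hset : projZeroLocus g ∩ projZeroLocus c = ↑(f.roots.toFinset.image φ) := by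
    ext p
    simp only [Set.mem_inter_iff, Finset.coe_image, Set.mem_image, Finset.mem_coe,
      Multiset.mem_toFinset, Polynomial.mem_roots hf0, Polynomial.IsRoot.def]
    constructor
    · rintro ⟨h1, h2⟩
      obtain ⟨a, h⟩ := hcov _ h1
      have h2' : eval p.rep c = 0 := h2
      have ha : a ≠ 0 := by
        rintro rfl
        apply p.rep_nonzero
        rcases h with h | ⟨s, h⟩ <;> simpa using h
      rcases h with h | ⟨s, h⟩
      · rw [h, hom_eval_smul hc] at h2'
        simp [ha, hA] at h2'
      · rw [h, hom_eval_smul hc] at h2'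
        refine ⟨s, ?_, ?_⟩
        · rw [hf, eval_aeval]
          simpa [ha] using h2'
        · rw [← p.mk_rep, hφ]
          simp only
          rw [Projectivization.mk_eq_mk_iff']
          exact ⟨a⁻¹, by rw [h, smul_smul, inv_mul_cancel₀ ha, one_smul]⟩
    · rintro ⟨s, hs, rfl⟩
      refine ⟨(mk_mem_locus hg _ _).mpr (hgP s), (mk_mem_locus hc _ _).mpr ?_⟩
      rw [← eval_aeval, ← hf, hs]
  rw [hset]
  refine ⟨Finset.finite_toSet _, ?_, ?_⟩
  · rw [Set.ncard_coe_finset]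
    refine Finset.card_image_le.trans ((Multiset.toFinset_card_le _).trans ?_)
    exact (Polynomial.card_roots' f).trans hdeg
  · intro htr
    rw [Set.ncard_coe_finset, Finset.card_image_of_injective _ hφi, Multiset.toFinset_card_of_nodup,
      IsAlgClosed.card_roots_eq_natDegree, hdeg']
    rw [Polynomial.nodup_roots_iff_of_splits hf0 (IsAlgClosed.splits f)]
    rw [Polynomial.separable_def]
    rw [Polynomial.isCoprime_iff_aeval_ne_zero_of_isAlgClosed ℂ ℂ]
    intro s
    by_contra! hcon
    obtain ⟨h1, h2⟩ := hcon
    simp only [Polynomial.coe_aeval_eq_eval] at h1 h2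
    have hcs : eval (fun i => (P i).eval s) c = 0 := by rw [← eval_aeval]; exact h1
    have hqs : ∀ t, eval (fun i => (P i).eval t) q = 0 := fun t => hgq _ (hgP t)
    have hq0 : aeval P q = 0 := by
      apply Polynomial.funext
      intro t
      rw [eval_aeval, hqs]; simp
    have h3 : (Polynomial.derivative (aeval P q)).eval s = 0 := by rw [hq0]; simp
    rw [hf, derivative_aeval, Polynomial.eval_finsetSum] at h2
    rw [derivative_aeval, Polynomial.eval_finsetSum] at h3
    simp only [Polynomial.eval_mul, eval_aeval] at h2 h3
    have euler : ∀ {m : ℕ} {r : MvPolynomial (Fin 3) ℂ}, r.IsHomogeneous m →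
        eval (fun i => (P i).eval s) r = 0 →
        (fun i => eval (fun i => (P i).eval s) (pderiv i r)) ⬝ᵥ (fun i => (P i).eval s) = 0 := by
      intro m r hr h0
      have := congrArg (eval (fun i => (P i).eval s)) hr.sum_X_mul_pderiv
      simp only [map_sum, map_mul, eval_X, map_nsmul, h0, smul_zero] at this
      rw [dotProduct, ← this]
      exact Finset.sum_congr rfl fun i _ => mul_comm _ _
    exact two_perp (euler hq (hqs s)) h3 (euler hc hcs) h2
      (htr _ (hP0 s) (hqs s) hcs) (hind s)

lemma exists_off {q c r : MvPolynomial (Fin 3) ℂ}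
    (hcop : ∀ r : MvPolynomial (Fin 3) ℂ, r ∣ q → r ∣ c → IsUnit r)
    (hr : r ∣ q) (hru : ¬ IsUnit r) : ∃ v, eval v r = 0 ∧ eval v c ≠ 0 := by
  by_contra! hcon
  have h1 : c ∈ vanishingIdeal ℂ (zeroLocus ℂ (Ideal.span {r})) := by
    rw [mem_vanishingIdeal_iff]
    intro x hx
    have := hx r (Ideal.subset_span rfl)
    rw [aeval_eq_eval] at this ⊢
    exact hcon x this
  rw [vanishingIdeal_zeroLocus_eq_radical] at h1
  obtain ⟨n, hn⟩ := h1
  rw [Ideal.mem_span_singleton] at hn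
  have hrel : IsRelPrime r c := fun d h1 h2 => hcop d (h1.trans hr) h2
  have : IsRelPrime r (c ^ n) := IsRelPrime.pow_right hrel
  exact hru (this dvd_rfl hn)

/-- The linear polynomial attached to a linear functional. -/
noncomputable def linPoly (φ : (Fin 3 → ℂ) →ₗ[ℂ] ℂ) : MvPolynomial (Fin 3) ℂ :=
  ∑ i, C (φ (Pi.single i 1)) * X i

lemma linPoly_hom (φ : (Fin 3 → ℂ) →ₗ[ℂ] ℂ) : (linPoly φ).IsHomogeneous 1 := by
  refine IsHomogeneous.sum _ _ _ fun i _ => ?_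
  have := (isHomogeneous_C (Fin 3) (φ (Pi.single i 1))).mul (isHomogeneous_X ℂ i)
  simpa using this

lemma linPoly_eval (φ : (Fin 3 → ℂ) →ₗ[ℂ] ℂ) (v : Fin 3 → ℂ) : eval v (linPoly φ) = φ v := by
  simp only [linPoly, map_sum, map_mul, eval_C, eval_X]
  conv_rhs => rw [← LinearMap.sum_single_apply (fun _ => ℂ) v]
  rw [map_sum]
  refine Finset.sum_congr rfl fun i _ => ?_
  have : (Pi.single i (v i) : Fin 3 → ℂ) = v i • Pi.single i 1 := by
    rw [← Pi.single_smul]; simp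
  rw [this, map_smul, smul_eq_mul, mul_comm]

lemma hom_eval_zero {n : ℕ} {g : MvPolynomial (Fin 3) ℂ} (hg : g.IsHomogeneous n) (hn : n ≠ 0) :
    eval 0 g = 0 := by
  have := hom_eval_smul hg 0 0
  simpa [hn] using this

lemma hom_not_unit {n : ℕ} {g : MvPolynomial (Fin 3) ℂ} (hg : g.IsHomogeneous n) (hn : n ≠ 0) :
    ¬ IsUnit g := by
  intro h
  have := h.map (eval (0 : Fin 3 → ℂ))
  rw [hom_eval_zero hg hn] at this
  simp at this

lemma line_count {q c : MvPolynomial (Fin 3) ℂ}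
    (hq : q.IsHomogeneous 2) (hc : c.IsHomogeneous 3)
    (hcop : ∀ r : MvPolynomial (Fin 3) ℂ, r ∣ q → r ∣ c → IsUnit r)
    (φ : (Fin 3 → ℂ) →ₗ[ℂ] ℂ) (hφ : φ ≠ 0) (hdvd : linPoly φ ∣ q) :
    (projZeroLocus (linPoly φ) ∩ projZeroLocus c).Finite ∧
    (projZeroLocus (linPoly φ) ∩ projZeroLocus c).ncard ≤ 3 * 1 ∧
    ((∀ v : Fin 3 → ℂ, v ≠ 0 → eval v q = 0 → eval v c = 0 →
        LinearIndependent ℂ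
          ![fun i => eval v (pderiv i q), fun i => eval v (pderiv i c)]) →
      (projZeroLocus (linPoly φ) ∩ projZeroLocus c).ncard = 3 * 1) := by
  obtain ⟨a, ha, hca⟩ := exists_off hcop hdvd (hom_not_unit (linPoly_hom φ) one_ne_zero)
  have ha0 : a ≠ 0 := by rintro rfl; exact hca (hom_eval_zero hc (by norm_num))
  rw [linPoly_eval] at ha
  have hr : Module.finrank ℂ (LinearMap.range φ) = 1 := by
    rw [LinearMap.range_eq_top.mpr (LinearMap.surjective hφ)]; simp
  have hk : Module.finrank ℂ (LinearMap.ker φ) = 2 := by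
    have := φ.finrank_range_add_finrank_ker
    rw [hr] at this
    simp at this
    omega
  obtain ⟨b, hb⟩ := exists_linearIndependent_pair_of_one_lt_finrank (R := ℂ)
    (M := LinearMap.ker φ) (by omega) (x := ⟨a, ha⟩) (by simpa [Subtype.ext_iff] using ha0)
  have hab : LinearIndependent ℂ ![a, (b : Fin 3 → ℂ)] := by
    have := hb.map' (LinearMap.ker φ).subtype (Submodule.ker_subtype _)
    have e : (⇑(LinearMap.ker φ).subtype ∘ ![⟨a, ha⟩, b]) = ![a, (b : Fin 3 → ℂ)] := by
      ext i; fin_cases i <;> rfl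
    rw [e] at this
    exact this
  have hpair := LinearIndependent.pair_iff.mp hab
  have hsp : ∀ v, φ v = 0 → ∃ x y : ℂ, v = x • a + y • (b : Fin 3 → ℂ) := by
    intro v hv
    let B := basisOfLinearIndependentOfCardEqFinrank hb (by simp [hk])
    have := B.sum_repr ⟨v, hv⟩
    rw [Fin.sum_univ_two] at this
    simp only [B, coe_basisOfLinearIndependentOfCardEqFinrank] at this
    exact ⟨_, _, (congrArg Subtype.val this).symm⟩
  have hb0 : φ b = 0 := b.2
  have hPe : ∀ s, (fun i => (Polynomial.C (a i) * Polynomial.X + Polynomial.C ((b : Fin 3 → ℂ) i)).eval s)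
      = s • a + (b : Fin 3 → ℂ) := by
    intro s; ext i; simp; ring
  have hPc : (fun i => (Polynomial.C (a i) * Polynomial.X + Polynomial.C ((b : Fin 3 → ℂ) i)).coeff 1) = a := by
    ext i; simp [Polynomial.coeff_C]
  refine curve_count hq hc (linPoly_hom φ) (k := 1) ?_
    (fun i => Polynomial.C (a i) * Polynomial.X + Polynomial.C ((b : Fin 3 → ℂ) i))
    ?_ ?_ ?_ ?_ ?_ ?_
  · intro v hv
    obtain ⟨r, rfl⟩ := hdvd
    simp [hv]
  · intro i; exact Polynomial.natDegree_linear_le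
  · rw [hPc]; exact hca
  · intro s; rw [hPe, linPoly_eval]; simp [ha, hb0]
  · intro s
    have : (fun i => (Polynomial.derivative (Polynomial.C (a i) * Polynomial.X + Polynomial.C ((b : Fin 3 → ℂ) i))).eval s) = a := by
      ext i; simp
    rw [hPe, this, LinearIndependent.pair_iff]
    intro x y h
    have := hpair (x * s + y) x (by rw [← h]; module)
    obtain ⟨h1, rfl⟩ := this
    simpa using h1
  · intro s t e h
    rw [hPe, hPe] at h
    have := hpair (s - e * t) (1 - e) (by
      have : (s - e * t) • a + (1 - e) • (b : Fin 3 → ℂ) = (s • a + (b : Fin 3 → ℂ)) - e • (t • a + (b : Fin 3 → ℂ)) := by module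
      rw [this, h, sub_self])
    obtain ⟨h1, h2⟩ := this
    linear_combination h1 - t * h2
  · intro v hv
    rw [linPoly_eval] at hv
    obtain ⟨x, y, rfl⟩ := hsp v hv
    by_cases hy : y = 0
    · exact ⟨x, Or.inl (by rw [hPc, hy]; simp)⟩
    · refine ⟨y, Or.inr ⟨x / y, ?_⟩⟩
      rw [hPe, smul_add, smul_smul, mul_div_cancel₀ _ hy]

lemma two_lines {q c : MvPolynomial (Fin 3) ℂ}
    (hq : q.IsHomogeneous 2) (hc : c.IsHomogeneous 3) (hq0 : q ≠ 0)
    (hcop : ∀ r : MvPolynomial (Fin 3) ℂ, r ∣ q → r ∣ c → IsUnit r)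
    (φ ψ : (Fin 3 → ℂ) →ₗ[ℂ] ℂ) (h : ∀ v, eval v q = φ v * ψ v) :
    (projZeroLocus q ∩ projZeroLocus c).Finite ∧
    (projZeroLocus q ∩ projZeroLocus c).ncard ≤ 6 ∧
    ((∀ v : Fin 3 → ℂ, v ≠ 0 → eval v q = 0 → eval v c = 0 →
        LinearIndependent ℂ
          ![fun i => eval v (pderiv i q), fun i => eval v (pderiv i c)]) →
      (projZeroLocus q ∩ projZeroLocus c).ncard = 6) := by
  have hqe : q = linPoly φ * linPoly ψ := by
    apply MvPolynomial.funext
    intro v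
    rw [h, map_mul, linPoly_eval, linPoly_eval]
  have hφ : φ ≠ 0 := by
    rintro rfl; apply hq0; apply MvPolynomial.funext; intro v; rw [h]; simp
  have hψ : ψ ≠ 0 := by
    rintro rfl; apply hq0; apply MvPolynomial.funext; intro v; rw [h]; simp
  obtain ⟨f1, l1, t1⟩ := line_count hq hc hcop φ hφ ⟨_, hqe⟩
  obtain ⟨f2, l2, t2⟩ := line_count hq hc hcop ψ hψ ⟨linPoly φ, by rw [hqe, mul_comm]⟩
  have hset : projZeroLocus q ∩ projZeroLocus c =
      (projZeroLocus (linPoly φ) ∩ projZeroLocus c) ∪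
      (projZeroLocus (linPoly ψ) ∩ projZeroLocus c) := by
    rw [← Set.union_inter_distrib_right]
    congr 1
    ext p
    simp [projZeroLocus, hqe]
  rw [hset]
  refine ⟨f1.union f2, (Set.ncard_union_le _ _).trans (by omega), fun htr => ?_⟩
  rw [Set.ncard_union_eq _ f1 f2, t1 htr, t2 htr]
  rw [Set.disjoint_left]
  rintro p ⟨hp1, hp2⟩ ⟨hp3, -⟩
  have e1 : eval p.rep (linPoly φ) = 0 := hp1
  have e2 : eval p.rep (linPoly ψ) = 0 := hp3
  have := (htr p.rep p.rep_nonzero (by rw [hqe, map_mul, e1, zero_mul]) hp2).ne_zero 0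
  apply this
  ext i
  simp [hqe, pderiv_mul, e1, e2]

lemma exists_bilin {q : MvPolynomial (Fin 3) ℂ} (hq : q.IsHomogeneous 2) :
    ∃ B : LinearMap.BilinForm ℂ (Fin 3 → ℂ), (∀ u v, B u v = B v u) ∧ ∀ v, eval v q = B v v := by
  have key : ∃ B : LinearMap.BilinForm ℂ (Fin 3 → ℂ), ∀ v, 2 * eval v q = B v v := by
    have h2 : ∀ i j, ∃ a : ℂ, pderiv j (pderiv i q) = C a := by
      intro i j
      have := (hq.pderiv (i := i)).pderiv (i := j)
      exact ⟨_, totalDegree_eq_zero_iff_eq_C.mp (Nat.le_zero.mp this.totalDegree_le)⟩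
    choose M hM using h2
    refine ⟨Matrix.toBilin' (Matrix.of M), fun v => ?_⟩
    have e1 := congrArg (eval v) hq.sum_X_mul_pderiv
    have e2 : ∀ i, ∑ j, v j * M i j = eval v (pderiv i q) := by
      intro i
      have := congrArg (eval v) (hq.pderiv (i := i)).sum_X_mul_pderiv
      simpa [hM] using this
    simp only [map_sum, map_mul, eval_X, ← e2, map_nsmul] at e1
    rw [Matrix.toBilin'_apply]
    rw [nsmul_eq_mul] at e1
    push_cast at e1
    rw [← e1]
    refine Finset.sum_congr rfl fun i _ => ?_
    rw [Finset.mul_sum]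
    refine Finset.sum_congr rfl fun j _ => ?_
    simp; ring
  obtain ⟨B, hB⟩ := key
  refine ⟨(4 : ℂ)⁻¹ • (B + B.flip), fun u v => ?_, fun v => ?_⟩
  · simp; ring
  · simp; linear_combination (1/2) * hB v

lemma binary_factor (α β γ : ℂ) : ∃ a b c d : ℂ, ∀ y z : ℂ,
    α * y ^ 2 + β * (y * z) + γ * z ^ 2 = (a * y + b * z) * (c * y + d * z) := by
  by_cases hα : α = 0
  · exact ⟨0, 1, β, γ, fun y z => by rw [hα]; ring⟩
  · obtain ⟨s, hs⟩ := IsAlgClosed.exists_pow_nat_eq (β ^ 2 - 4 * α * γ) (n := 2) (by norm_num)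
    refine ⟨α, (β + s) / 2, 1, (β - s) / (2 * α), fun y z => ?_⟩
    field_simp
    linear_combination (z ^ 2) * hs

lemma span_three {u v w : Fin 3 → ℂ} (h : LinearIndependent ℂ ![u, v, w]) :
    ∃ f g k : (Fin 3 → ℂ) →ₗ[ℂ] ℂ, ∀ x, x = f x • u + g x • v + k x • w := by
  let B := basisOfLinearIndependentOfCardEqFinrank h (by simp)
  refine ⟨B.coord 0, B.coord 1, B.coord 2, fun x => ?_⟩
  have := B.sum_repr x
  rw [Fin.sum_univ_three] at this
  simp only [B, coe_basisOfLinearIndependentOfCardEqFinrank] at this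
  exact this.symm

lemma indep_three {u v w : Fin 3 → ℂ}
    (h : ∀ x y z : ℂ, x • u + y • v + z • w = 0 → x = 0 ∧ y = 0 ∧ z = 0) :
    LinearIndependent ℂ ![u, v, w] := by
  rw [Fintype.linearIndependent_iff]
  intro g hg
  rw [Fin.sum_univ_three] at hg
  obtain ⟨h0, h1, h2⟩ := h _ _ _ hg
  intro i; fin_cases i <;> assumption

/-- Bézout in the plane for a conic and a cubic: two plane projective curves
of degrees 2 and 3 with no common component meet in at most 6 points, and in
exactly 6 points if they meet transversally. -/
theorem bezout_conic_cubic
    (q c : MvPolynomial (Fin 3) ℂ)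
    (hq : q.IsHomogeneous 2) (hc : c.IsHomogeneous 3)
    (hq0 : q ≠ 0) (hc0 : c ≠ 0)
    (hcop : ∀ r : MvPolynomial (Fin 3) ℂ, r ∣ q → r ∣ c → IsUnit r) :
    (projZeroLocus q ∩ projZeroLocus c).Finite ∧
    (projZeroLocus q ∩ projZeroLocus c).ncard ≤ 6 ∧
    ((∀ v : Fin 3 → ℂ, v ≠ 0 → eval v q = 0 → eval v c = 0 →
        LinearIndependent ℂ
          ![fun i => eval v (pderiv i q), fun i => eval v (pderiv i c)]) →
      (projZeroLocus q ∩ projZeroLocus c).ncard = 6) := by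
  obtain ⟨B, hsym, hB⟩ := exists_bilin hq
  by_cases hsing : ∃ e, e ≠ 0 ∧ ∀ v, B e v = 0
  · obtain ⟨e, he, hBe⟩ := hsing
    have hBe' : ∀ v, B v e = 0 := fun v => by rw [hsym, hBe]
    obtain ⟨u, hu⟩ := exists_linearIndependent_pair_of_one_lt_finrank (R := ℂ)
      (M := Fin 3 → ℂ) (by simp) he
    obtain ⟨w, hw⟩ := exists_linearIndependent_cons_of_lt_finrank (R := ℂ)
      (M := Fin 3 → ℂ) (v := ![e, u]) hu (by simp)
    obtain ⟨f, g, k, hfg⟩ := span_three (u := w) (v := e) (w := u) hw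
    obtain ⟨a, b, c', d, hab⟩ := binary_factor (B w w) (2 * B w u) (B u u)
    refine two_lines hq hc hq0 hcop (a • f + b • k) (c' • f + d • k) fun v => ?_
    have h2 := hab (f v) (k v)
    simp only [LinearMap.add_apply, LinearMap.smul_apply, smul_eq_mul]
    rw [← h2, hB]
    conv_lhs => rw [hfg v]
    simp only [map_add, map_smul, LinearMap.add_apply, LinearMap.smul_apply, smul_eq_mul, hBe, hBe',
      hsym u w]
    ring
  · push Not at hsing
    obtain ⟨a, ha, hca⟩ := exists_off hcop dvd_rfl (hom_not_unit hq two_ne_zero)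
    have ha0 : a ≠ 0 := by rintro rfl; exact hca (hom_eval_zero hc (by norm_num))
    rw [hB] at ha
    obtain ⟨w, hw⟩ := hsing a ha0
    -- an isotropic vector not orthogonal to `a`
    obtain ⟨d₀, hd₀, had₀⟩ : ∃ d₀, B d₀ d₀ = 0 ∧ B a d₀ ≠ 0 := by
      refine ⟨w - (B w w / (2 * B a w)) • a, ?_, ?_⟩
      · simp only [map_sub, map_smul, LinearMap.sub_apply, LinearMap.smul_apply, smul_eq_mul, ha,
          hsym w a]
        field_simp
        ring
      · simpa [ha] using hw
    obtain ⟨b, hb0, hab, hdb⟩ : ∃ b, b ≠ 0 ∧ B a b = 0 ∧ B d₀ b = 0 := by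
      have hk := LinearMap.ker_ne_bot_of_finrank_lt (f := (B a).prod (B d₀)) (by simp)
      obtain ⟨b, hb, hb0⟩ := Submodule.exists_mem_ne_zero_of_ne_bot hk
      simp at hb
      exact ⟨b, hb0, hb.1, hb.2⟩
    have indep : ∀ d, B d d = 0 → B a d ≠ 0 → B d b = 0 → LinearIndependent ℂ ![a, b, d] := by
      intro d hd had hdb
      apply indep_three
      intro x y z h
      have h1 := congrArg (B a) h
      have h2 := congrArg (B d) h
      simp [ha, hab, had, hd, hdb, hsym d a] at h1 h2
      subst h1 h2
      simp [hb0] at h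
      simp [h]
    have hbb : B b b ≠ 0 := by
      intro hbb
      obtain ⟨v, hv⟩ := hsing b hb0
      obtain ⟨f, g, k, hfg⟩ := span_three (indep d₀ hd₀ had₀ hdb)
      apply hv
      rw [hfg v]
      simp [hsym b a, hsym b d₀, hab, hdb, hbb]
    -- rescale so that `q (x a + y b + z d) = β (y² - x z)`
    obtain ⟨d, hd, had, hdb⟩ : ∃ d, B d d = 0 ∧ 2 * B a d = - B b b ∧ B d b = 0 := by
      refine ⟨(- B b b / (2 * B a d₀)) • d₀, by simp [hd₀], ?_, by simp [hdb]⟩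
      simp; field_simp
    have hind := indep d hd (by intro h; rw [h] at had; simp at had; exact hbb had) hdb
    have h3 : ∀ x y z : ℂ, x • a + y • b + z • d = 0 → x = 0 ∧ y = 0 ∧ z = 0 := by
      intro x y z h
      have := Fintype.linearIndependent_iff.mp hind ![x, y, z] (by
        rw [Fin.sum_univ_three]; exact h)
      exact ⟨this 0, this 1, this 2⟩
    have hval : ∀ x y z : ℂ, eval (x • a + y • b + z • d) q = B b b * (y ^ 2 - x * z) := by
      intro x y z
      rw [hB]
      simp only [map_add, map_smul, LinearMap.add_apply, LinearMap.smul_apply, smul_eq_mul, ha, hd,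
        hab, hdb, hsym b a, hsym b d, hsym d a]
      linear_combination (x * z) * had
    obtain ⟨f, g, k, hfg⟩ := span_three hind
    have hPe : ∀ s, (fun i => (Polynomial.C (a i) * Polynomial.X ^ 2 +
        Polynomial.C (b i) * Polynomial.X + Polynomial.C (d i)).eval s)
        = s ^ 2 • a + s • b + (1 : ℂ) • d := by
      intro s; ext i; simp; ring
    have hPc : (fun i => (Polynomial.C (a i) * Polynomial.X ^ 2 +
        Polynomial.C (b i) * Polynomial.X + Polynomial.C (d i)).coeff 2) = a := by
      ext i; simp [Polynomial.coeff_C, Polynomial.coeff_X]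
    refine curve_count hq hc hq (k := 2) (fun v h => h)
      (fun i => Polynomial.C (a i) * Polynomial.X ^ 2 +
        Polynomial.C (b i) * Polynomial.X + Polynomial.C (d i))
      ?_ ?_ ?_ ?_ ?_ ?_
    · intro i; exact Polynomial.natDegree_quadratic_le
    · rw [hPc]; exact hca
    · intro s; rw [hPe, hval]; ring
    · intro s
      have : (fun i => (Polynomial.derivative (Polynomial.C (a i) * Polynomial.X ^ 2 +
        Polynomial.C (b i) * Polynomial.X + Polynomial.C (d i))).eval s) = (2 * s) • a + b := by
        ext i; simp; ring
      rw [hPe, this, LinearIndependent.pair_iff]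
      intro x y h
      obtain ⟨-, h2, rfl⟩ := h3 (x * s ^ 2 + y * (2 * s)) (x * s + y) x (by rw [← h]; module)
      simpa using h2
    · intro s t e h
      rw [hPe, hPe] at h
      obtain ⟨-, h1, h2⟩ := h3 (s ^ 2 - e * t ^ 2) (s - e * t) (1 - e) (by
        have : (s ^ 2 - e * t ^ 2) • a + (s - e * t) • b + (1 - e) • d =
          (s ^ 2 • a + s • b + (1 : ℂ) • d) - e • (t ^ 2 • a + t • b + (1 : ℂ) • d) := by module
        rw [this, h, sub_self])
      linear_combination h1 - t * h2
    · intro v hv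
      have hv' := hfg v
      generalize f v = x at hv'
      generalize g v = y at hv'
      generalize k v = z at hv'
      subst hv'
      rw [hval] at hv
      have hv2 : y ^ 2 - x * z = 0 := (mul_eq_zero.mp hv).resolve_left hbb
      by_cases hz : z = 0
      · subst hz
        have hy : y = 0 := by simpa using hv2
        exact ⟨x, Or.inl (by rw [hPc, hy]; simp)⟩
      · refine ⟨z, Or.inr ⟨y / z, ?_⟩⟩
        rw [hPe, smul_add, smul_add, smul_smul, smul_smul, smul_smul]
        have e1 : z * (y / z) ^ 2 = x := by field_simp; linear_combination hv2
        have e2 : z * (y / z) = y := by field_simp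
        rw [e1, e2, mul_one]
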